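/- Let I_k = ∫₀^∞ λ^k e^{-λ} e^{-λ²/2} dλ and define R(k) = I_{k+1} / ((k+1) · I_k) for natural numbers k. Then there exist a constant C > 0 and a natural number K such that for all k ≥ K, R(k) ≤ C · √(log(k)/k). In particular, (k+1)·R(k) = o(k) as k → ∞. -/

import Mathlib

/-!
Let `M_k` be the moments of the weight `e^{-cx - bx²/2}` on `(0, ∞)`, so that `I_k = M_k` for
`b = c = 1`. Integration by parts gives `(k + 1) M_k = c M_{k+1} + b M_{k+2}`, hence
`b M_{k+2} ≤ (k + 1) M_k` when `c ≥ 0`, while Cauchy–Schwarz gives `M_{k+1}² ≤ M_k M_{k+2}`.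
Together, `M_{k+1} ≤ √((k + 1) / b) M_k`. Therefore `R_k ≤ 1 / √(k + 1)`, which is better than
required by a factor `√(log k)`.
-/

open MeasureTheory

/-- `I k = ∫₀^∞ λ^k e^{-λ} e^{-λ²/2} dλ`. -/
noncomputable def I (k : ℕ) : ℝ :=
  ∫ x in Set.Ioi (0 : ℝ), x ^ k * Real.exp (-x) * Real.exp (-x ^ 2 / 2)

/-- `R k = I (k+1) / ((k+1) · I k)`. -/
noncomputable def R (k : ℕ) : ℝ := I (k + 1) / (((k : ℝ) + 1) * I k)

open Filter Set Topology Asymptotics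

theorem sq_integral_mul_le_integral_mul_integral_sq_mul {α : Type*} [MeasurableSpace α]
    {μ : Measure α} {f w : α → ℝ} (hw : 0 ≤ᵐ[μ] w) (hw_int : Integrable w μ)
    (hfw_int : Integrable (fun x => f x * w x) μ)
    (hffw_int : Integrable (fun x => f x ^ 2 * w x) μ) :
    (∫ x, f x * w x ∂μ) ^ 2 ≤ (∫ x, w x ∂μ) * ∫ x, f x ^ 2 * w x ∂μ := by
  have quadratic_nonneg (s : ℝ) : 0 ≤ (∫ x, w x ∂μ) * (s * s) +
      (-2 * ∫ x, f x * w x ∂μ) * s + ∫ x, f x ^ 2 * w x ∂μ := by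
    calc 0 ≤ ∫ x, (f x - s) ^ 2 * w x ∂μ :=
          integral_nonneg_of_ae (hw.mono fun x hx => mul_nonneg (sq_nonneg _) hx)
      _ = ∫ x, (s * s) * w x + (-2 * s) * (f x * w x) + f x ^ 2 * w x ∂μ := by
          congr with x
          ring
      _ = _ := by
          rw [integral_add ((hw_int.const_mul _).fun_add (hfw_int.const_mul _)) hffw_int,
            integral_add (hw_int.const_mul _) (hfw_int.const_mul _),
            integral_const_mul, integral_const_mul]
          ring
  have discrim_nonpos := discrim_le_zero quadratic_nonneg
  rw [discrim] at discrim_nonpos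
  linarith

/-- The unnormalised Gaussian density `e^{-cx - bx²/2}` with precision `b` and linear tilt `c`. -/
noncomputable def gaussianWeight (b c x : ℝ) : ℝ := Real.exp (-(c * x) - b * x ^ 2 / 2)

/-- The `k`-th moment of `gaussianWeight b c` over the positive half-line. -/
noncomputable def halfGaussianMoment (b c : ℝ) (k : ℕ) : ℝ :=
  ∫ x in Ioi 0, x ^ k * gaussianWeight b c x

section Moments

variable {b c : ℝ}

theorem gaussianWeight_pos (b c x : ℝ) : 0 < gaussianWeight b c x := Real.exp_pos _

theorem continuous_gaussianWeight (b c : ℝ) : Continuous (gaussianWeight b c) := by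
  unfold gaussianWeight
  fun_prop

theorem hasDerivAt_gaussianWeight (b c x : ℝ) :
    HasDerivAt (gaussianWeight b c) (-(c + b * x) * gaussianWeight b c x) x := by
  have hasDerivAt_exponent :
      HasDerivAt (fun x : ℝ => -(c * x) - b * x ^ 2 / 2) (-(c + b * x)) x := by
    refine (((hasDerivAt_id x).const_mul c).neg.sub
      (((hasDerivAt_pow 2 x).const_mul b).div_const 2)).congr_deriv ?_
    push_cast
    ring
  exact hasDerivAt_exponent.exp.congr_deriv (mul_comm _ _)

theorem hasDerivAt_pow_succ_mul_gaussianWeight (b c : ℝ) (k : ℕ) (x : ℝ) :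
    HasDerivAt (fun x => x ^ (k + 1) * gaussianWeight b c x)
      (((k : ℝ) + 1) * (x ^ k * gaussianWeight b c x) -
        (c * (x ^ (k + 1) * gaussianWeight b c x) +
          b * (x ^ (k + 2) * gaussianWeight b c x))) x := by
  refine ((hasDerivAt_pow (k + 1) x).mul (hasDerivAt_gaussianWeight b c x)).congr_deriv ?_
  rw [Nat.add_sub_cancel]
  push_cast
  ring

theorem pow_mul_gaussianWeight_isLittleO_rpow (hb : 0 < b) (c : ℝ) (k : ℕ) (s : ℝ) :
    (fun x => x ^ k * gaussianWeight b c x) =o[atTop] fun x : ℝ => x ^ s := by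
  have weight_isLittleO : gaussianWeight b c =o[atTop] fun x : ℝ => x ^ (s - k) := by
    refine (rexp_neg_quadratic_isLittleO_rpow_atTop (a := -b / 2) (by linarith) (-c) _).congr_left
      fun x => ?_
    rw [gaussianWeight]
    ring_nf
  refine ((isBigO_refl (fun x : ℝ => x ^ k) atTop).mul_isLittleO weight_isLittleO).congr'
    .rfl ?_
  filter_upwards [eventually_gt_atTop 0] with x hx
  rw [← Real.rpow_natCast, ← Real.rpow_add hx, add_sub_cancel]

theorem tendsto_pow_mul_gaussianWeight_atTop (hb : 0 < b) (c : ℝ) (k : ℕ) :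
    Tendsto (fun x => x ^ k * gaussianWeight b c x) atTop (𝓝 0) := by
  simpa only [Real.rpow_zero, isLittleO_one_iff] using
    pow_mul_gaussianWeight_isLittleO_rpow hb c k 0

theorem integrableOn_pow_mul_gaussianWeight (hb : 0 < b) (c : ℝ) (k : ℕ) :
    IntegrableOn (fun x => x ^ k * gaussianWeight b c x) (Ioi 0) := by
  have locallyIntegrable : LocallyIntegrableOn (fun x => x ^ k * gaussianWeight b c x) (Ici 0) :=
    ((continuous_pow k).mul (continuous_gaussianWeight b c)).locallyIntegrable.locallyIntegrableOn _
  have rpow_integrable : IntegrableAtFilter (fun x : ℝ => x ^ (-2 : ℝ)) atTop :=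
    ⟨Ioi 1, Ioi_mem_atTop 1, integrableOn_Ioi_rpow_of_lt (by norm_num) one_pos⟩
  exact (locallyIntegrable.integrableOn_of_isBigO_atTop
    (pow_mul_gaussianWeight_isLittleO_rpow hb c k _).isBigO rpow_integrable).mono_set
    Ioi_subset_Ici_self

theorem halfGaussianMoment_nonneg (b c : ℝ) (k : ℕ) : 0 ≤ halfGaussianMoment b c k :=
  setIntegral_nonneg measurableSet_Ioi fun x hx =>
    mul_nonneg (pow_nonneg (le_of_lt hx) k) (gaussianWeight_pos b c x).le

theorem succ_mul_halfGaussianMoment (hb : 0 < b) (c : ℝ) (k : ℕ) :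
    ((k : ℝ) + 1) * halfGaussianMoment b c k =
      c * halfGaussianMoment b c (k + 1) + b * halfGaussianMoment b c (k + 2) := by
  have const_mul_integrable (n : ℕ) := (integrableOn_pow_mul_gaussianWeight hb c n).const_mul
  have sum_integrable := (const_mul_integrable (k + 1) c).fun_add (const_mul_integrable (k + 2) b)
  have integral_deriv_eq_zero := integral_Ioi_of_hasDerivAt_of_tendsto'
    (fun x (_ : x ∈ Ici 0) => hasDerivAt_pow_succ_mul_gaussianWeight b c k x)
    ((const_mul_integrable k _).sub sum_integrable)
    (tendsto_pow_mul_gaussianWeight_atTop hb c (k + 1))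
  rw [integral_sub (const_mul_integrable k _) sum_integrable,
    integral_add (const_mul_integrable (k + 1) _) (const_mul_integrable (k + 2) _),
    integral_const_mul, integral_const_mul, integral_const_mul,
    zero_pow k.succ_ne_zero, zero_mul, sub_zero] at integral_deriv_eq_zero
  exact sub_eq_zero.mp integral_deriv_eq_zero

theorem sq_halfGaussianMoment_succ_le (hb : 0 < b) (c : ℝ) (k : ℕ) :
    halfGaussianMoment b c (k + 1) ^ 2 ≤
      halfGaussianMoment b c k * halfGaussianMoment b c (k + 2) := by
  have moment_integrable := integrableOn_pow_mul_gaussianWeight hb c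
  have integrand_nonneg :
      0 ≤ᵐ[volume.restrict (Ioi 0)] fun x => x ^ k * gaussianWeight b c x := by
    filter_upwards [ae_restrict_mem measurableSet_Ioi] with x hx
    exact mul_nonneg (pow_nonneg (le_of_lt hx) k) (gaussianWeight_pos b c x).le
  have succ_eq (x : ℝ) :
      x ^ (k + 1) * gaussianWeight b c x = x * (x ^ k * gaussianWeight b c x) := by
    ring
  have add_two_eq (x : ℝ) :
      x ^ (k + 2) * gaussianWeight b c x = x ^ 2 * (x ^ k * gaussianWeight b c x) := by
    ring
  simp only [halfGaussianMoment, succ_eq, add_two_eq]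
  refine sq_integral_mul_le_integral_mul_integral_sq_mul integrand_nonneg
    (moment_integrable k) ?_ ?_
  · simpa only [IntegrableOn, succ_eq] using moment_integrable (k + 1)
  · simpa only [IntegrableOn, add_two_eq] using moment_integrable (k + 2)

theorem halfGaussianMoment_succ_le (hb : 0 < b) (hc : 0 ≤ c) (k : ℕ) :
    halfGaussianMoment b c (k + 1) ≤ √((k + 1) / b) * halfGaussianMoment b c k := by
  have moment_nonneg := halfGaussianMoment_nonneg b c
  have add_two_le : halfGaussianMoment b c (k + 2) ≤ (k + 1) / b * halfGaussianMoment b c k := by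
    rw [div_mul_eq_mul_div, le_div_iff₀' hb, succ_mul_halfGaussianMoment hb c k]
    exact le_add_of_nonneg_left (mul_nonneg hc (moment_nonneg _))
  have bound_nonneg : 0 ≤ √((k + 1) / b) * halfGaussianMoment b c k :=
    mul_nonneg (Real.sqrt_nonneg _) (moment_nonneg k)
  refine (pow_le_pow_iff_left₀ (moment_nonneg _) bound_nonneg two_ne_zero).1 ?_
  calc halfGaussianMoment b c (k + 1) ^ 2
      ≤ halfGaussianMoment b c k * halfGaussianMoment b c (k + 2) :=
        sq_halfGaussianMoment_succ_le hb c k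
    _ ≤ halfGaussianMoment b c k * ((k + 1) / b * halfGaussianMoment b c k) :=
        mul_le_mul_of_nonneg_left add_two_le (moment_nonneg k)
    _ = (√((k + 1) / b) * halfGaussianMoment b c k) ^ 2 := by
        rw [mul_pow, Real.sq_sqrt (by positivity)]
        ring

end Moments

theorem I_eq_halfGaussianMoment (k : ℕ) : I k = halfGaussianMoment 1 1 k := by
  refine integral_congr_ae (.of_forall fun x => ?_)
  simp only [gaussianWeight, mul_assoc, ← Real.exp_add]
  ring_nf

theorem I_nonneg (k : ℕ) : 0 ≤ I k :=
  (halfGaussianMoment_nonneg 1 1 k).trans_eq (I_eq_halfGaussianMoment k).symm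

theorem I_succ_le (k : ℕ) : I (k + 1) ≤ √(k + 1) * I k := by
  simpa only [I_eq_halfGaussianMoment, div_one] using
    halfGaussianMoment_succ_le one_pos zero_le_one k

theorem R_nonneg (k : ℕ) : 0 ≤ R k :=
  div_nonneg (I_nonneg _) (mul_nonneg k.cast_add_one_pos.le (I_nonneg _))

theorem R_le_inv_sqrt_succ (k : ℕ) : R k ≤ (√(k + 1))⁻¹ := by
  refine div_le_of_le_mul₀ (mul_nonneg k.cast_add_one_pos.le (I_nonneg k)) (by positivity) ?_
  calc I (k + 1) ≤ √(k + 1) * I k := I_succ_le k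
    _ = (√(k + 1))⁻¹ * ((k + 1) * I k) := by
      rw [← mul_assoc, inv_mul_eq_div, Real.div_sqrt]

theorem tendsto_R_atTop : Tendsto R atTop (𝓝 0) := by
  have succ_tendsto : Tendsto (fun k : ℕ => (k : ℝ) + 1) atTop atTop :=
    tendsto_atTop_add_const_right _ 1 tendsto_natCast_atTop_atTop
  exact squeeze_zero R_nonneg R_le_inv_sqrt_succ
    (tendsto_inv_atTop_zero.comp (Real.tendsto_sqrt_atTop.comp succ_tendsto))

theorem R_le_sqrt_log_div {k : ℕ} (hk : 3 ≤ k) : R k ≤ √(Real.log k / k) := by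
  have three_le : (3 : ℝ) ≤ k := mod_cast hk
  have one_le_log : 1 ≤ Real.log k :=
    (Real.le_log_iff_exp_le (by linarith)).2 (Real.exp_one_lt_three.le.trans three_le)
  calc R k ≤ (√(k + 1))⁻¹ := R_le_inv_sqrt_succ k
    _ = √(1 / (k + 1)) := by rw [one_div, Real.sqrt_inv]
    _ ≤ √(Real.log k / k) := by
      gcongr
      linarith

/-- There are `C > 0` and `K` such that `R k ≤ C·√(log k / k)` for all `k ≥ K`;
in particular `(k+1)·R k = o(k)` as `k → ∞`. -/
theorem stmt1 :
    (∃ C : ℝ, 0 < C ∧ ∃ K : ℕ, ∀ k : ℕ, K ≤ k →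
      R k ≤ C * Real.sqrt (Real.log k / k)) ∧
    (fun k : ℕ => ((k : ℝ) + 1) * R k) =o[Filter.atTop] (fun k : ℕ => (k : ℝ)) := by
  refine ⟨⟨1, one_pos, 3, fun k hk => ?_⟩, ?_⟩
  · simpa only [one_mul] using R_le_sqrt_log_div hk
  · have succ_isBigO : (fun k : ℕ => (k : ℝ) + 1) =O[atTop] fun k : ℕ => (k : ℝ) :=
      (isBigO_refl _ _).add (isLittleO_const_id_atTop (1 : ℝ)).isBigO.natCast_atTop
    simpa only [mul_one] using
      succ_isBigO.mul_isLittleO ((isLittleO_one_iff ℝ).2 tendsto_R_atTop)
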